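/- arXiv:1504.01897 — 5 statements merged into one kernel-verified Lean document; each statement's English description precedes it below -/
import Mathlib

section
/- Let m > 0 and ℓ be real constants, let z : ℝ → ℂ be twice differentiable with z(t) ≠ 0 for all t, let r(t) = |z(t)| be twice differentiable, and suppose that for all t, z'(t) = ( r'(t) + i·ℓ/(m·r(t)) ) · z(t)/r(t). Then for all t, z''(t) = ( r''(t) − ℓ²/(m²·r(t)³) ) · z(t)/r(t). -/
/-- If a planar trajectory `z` with constant angular momentum `ℓ` satisfies
the velocity decomposition `z' = (r' + i·ℓ/(m·r))·z/r` with `r = |z|` twice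
differentiable, then `z'' = (r'' − ℓ²/(m²·r³))·z/r`. -/
theorem acceleration_decomposition (m ℓ : ℝ) (hm : 0 < m)
    (z : ℝ → ℂ) (hz : Differentiable ℝ z) (hz' : Differentiable ℝ (deriv z))
    (hne : ∀ t, z t ≠ 0)
    (r : ℝ → ℝ) (hr : ∀ t, r t = ‖z t‖)
    (hrd : Differentiable ℝ r) (hrd' : Differentiable ℝ (deriv r))
    (hvel : ∀ t, deriv z t =
      (((deriv r t : ℝ) : ℂ) + Complex.I * ((ℓ / (m * r t) : ℝ) : ℂ)) * z t / ((r t : ℝ) : ℂ)) :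
    ∀ t, deriv (deriv z) t =
      (((deriv (deriv r) t : ℝ) : ℂ) - ((ℓ ^ 2 / (m ^ 2 * (r t) ^ 3) : ℝ) : ℂ)) * z t /
        ((r t : ℝ) : ℂ) := by
  intro t
  have hm0 : (m : ℂ) ≠ 0 := by exact_mod_cast hm.ne'
  have hr_ne : r t ≠ 0 := by simpa [hr t] using hne t
  have hr0 : (r t : ℂ) ≠ 0 := by exact_mod_cast hr_ne
  have hR : HasDerivAt (fun s => (r s : ℂ)) ((deriv r t : ℝ) : ℂ) t :=
    (hrd t).hasDerivAt.ofReal_comp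
  have hR' : HasDerivAt (fun s => ((deriv r s : ℝ) : ℂ)) ((deriv (deriv r) t : ℝ) : ℂ) t :=
    (hrd' t).hasDerivAt.ofReal_comp
  have hvel_fun : deriv z = fun s =>
      (((deriv r s : ℝ) : ℂ) + Complex.I * ((ℓ : ℂ) / ((m : ℂ) * (r s : ℂ)))) * z s / (r s : ℂ) := by
    funext s
    rw [hvel s]
    push_cast
    rfl
  have hangular := ((hasDerivAt_const t (ℓ : ℂ)).fun_div (hR.const_mul (m : ℂ))
    (mul_ne_zero hm0 hr0)).const_mul Complex.I
  have hacc := ((hR'.fun_add hangular).fun_mul (hz t).hasDerivAt).fun_div hR hr0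
  rw [← hvel_fun] at hacc
  rw [hacc.deriv, hvel t]
  push_cast
  field_simp
  ring_nf
  simp only [Complex.I_sq]
  ring
end

section
/- Let I ⊆ (0,∞) be an open interval, m > 0, ℓ ≠ 0 real constants, ε ∈ {1, −1}, let f : ℝ → ℝ be differentiable with f(r) > 0 on I, and let u : ℝ → ℝ be twice differentiable on I satisfying u''(r) + (1/r + f'(r)/(2f(r)))·u'(r) + u(r)/(r²·f(r)) = 0 on I. Define b(r) = u'(r) and c(r) = u'(r) + u(r)/r. Let z : ℝ → ℂ be differentiable with z(t) ≠ 0, r(t) := |z(t)| ∈ I, and z'(t) = ( ε·√(f(r(t))) + i )·(ℓ/(m·r(t)²))·z(t) for all t. Then the complexified Fradkin–Bacry–Ruegg–Souriau vector 𝒜(t) = ( c(r(t)) − b(r(t)) + ε·i·√(f(r(t)))·b(r(t)) )·z(t) is constant in t. -/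
/-- If `z' = a z` at a point where `z ≠ 0`, then `|z|' = Re a · |z|` there. -/
theorem hasDerivAt_norm_of_hasDerivAt_mul_self {z : ℝ → ℂ} {a : ℂ} {t : ℝ}
    (hz : HasDerivAt z (a * z t) t) (hne : z t ≠ 0) :
    HasDerivAt (fun τ => ‖z τ‖) (a.re * ‖z t‖) t := by
  have hpos : 0 < ‖z t‖ := norm_pos_iff.mpr hne
  have hsqrt := hz.norm_sq.sqrt (pow_ne_zero 2 hpos.ne')
  simp only [Real.sqrt_sq (norm_nonneg _)] at hsqrt
  convert hsqrt using 1
  have hinner : inner ℝ (z t) (a * z t) = a.re * ‖z t‖ ^ 2 := by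
    rw [Complex.inner, ← Complex.normSq_eq_norm_sq, mul_assoc, Complex.mul_conj,
      Complex.re_mul_ofReal]
  rw [hinner]
  field_simp

/-- On a phase of the radial motion (sign `ε = ±1`), with `f > 0`
differentiable on the open interval `I = (p,q) ⊆ (0,∞)`, `u` a solution of the Peres
radial ODE on `I`, `b = u'`, `c = u' + u/r`, and a trajectory `z` with `r(t) = |z(t)| ∈ I`
satisfying `z' = (ε·√(f(r)) + i)·(ℓ/(m·r²))·z`, the complexified
Fradkin–Bacry–Ruegg–Souriau vector `𝒜 = (c(r) − b(r) + ε·i·√(f(r))·b(r))·z` is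
constant in `t`. -/
theorem fbrs_vector_conserved (p q m ℓ : ℝ) (hp : 0 ≤ p) (hm : 0 < m) (hℓ : ℓ ≠ 0)
    (ε : ℝ) (hε : ε = 1 ∨ ε = -1)
    (f : ℝ → ℝ)
    (hf : ∀ r ∈ Set.Ioo p q, DifferentiableAt ℝ f r)
    (hfpos : ∀ r ∈ Set.Ioo p q, 0 < f r)
    (u : ℝ → ℝ)
    (hu : ∀ r ∈ Set.Ioo p q, DifferentiableAt ℝ u r)
    (hu' : ∀ r ∈ Set.Ioo p q, DifferentiableAt ℝ (deriv u) r)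
    (hode : ∀ r ∈ Set.Ioo p q,
      deriv (deriv u) r + (1 / r + deriv f r / (2 * f r)) * deriv u r +
        u r / (r ^ 2 * f r) = 0)
    (b c : ℝ → ℝ)
    (hb : ∀ r, b r = deriv u r)
    (hc : ∀ r, c r = deriv u r + u r / r)
    (z : ℝ → ℂ) (hz : Differentiable ℝ z) (hzne : ∀ t, z t ≠ 0)
    (hrI : ∀ t, ‖z t‖ ∈ Set.Ioo p q)
    (hvel : ∀ t, deriv z t =
      (((ε * Real.sqrt (f (‖z t‖)) : ℝ) : ℂ) + Complex.I) *
        ((ℓ / (m * (‖z t‖) ^ 2) : ℝ) : ℂ) * z t) :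
    ∀ s t,
      (((c (‖z s‖) - b (‖z s‖) : ℝ) : ℂ) +
          ((ε : ℝ) : ℂ) * Complex.I * ((Real.sqrt (f (‖z s‖)) : ℝ) : ℂ) *
            ((b (‖z s‖) : ℝ) : ℂ)) * z s =
      (((c (‖z t‖) - b (‖z t‖) : ℝ) : ℂ) +
          ((ε : ℝ) : ℂ) * Complex.I * ((Real.sqrt (f (‖z t‖)) : ℝ) : ℂ) *
            ((b (‖z t‖) : ℝ) : ℂ)) * z t := by
  have hdiff : ∀ t, HasDerivAt (fun t =>
      (((c (‖z t‖) - b (‖z t‖) : ℝ) : ℂ) +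
          ((ε : ℝ) : ℂ) * Complex.I * ((Real.sqrt (f (‖z t‖)) : ℝ) : ℂ) *
            ((b (‖z t‖) : ℝ) : ℂ)) * z t) 0 t := by
    intro t
    have hr : 0 < ‖z t‖ := norm_pos_iff.mpr (hzne t)
    have hF := hfpos _ (hrI t)
    have hz' := (hz t).hasDerivAt
    rw [hvel t] at hz'
    have hnorm := hasDerivAt_norm_of_hasDerivAt_mul_self hz' (hzne t)
    rw [Complex.re_mul_ofReal, Complex.add_re, Complex.ofReal_re, Complex.I_re, add_zero] at hnorm
    have hsqrt := ((hf _ (hrI t)).hasDerivAt.comp t hnorm).sqrt hF.ne'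
    have hb' := (hu' _ (hrI t)).hasDerivAt.comp t hnorm
    have hcb := ((hu _ (hrI t)).hasDerivAt.comp t hnorm).div hnorm hr.ne'
    have hA := (hcb.ofReal_comp.add
      ((hsqrt.ofReal_comp.const_mul ((ε : ℂ) * Complex.I)).mul hb'.ofReal_comp)).mul hz'
    have hsum : ∀ τ, c ‖z τ‖ - b ‖z τ‖ = u ‖z τ‖ / ‖z τ‖ := fun τ => by rw [hb, hc]; ring
    simp only [hsum]
    simp only [hb]
    refine hA.congr_deriv ?_
    have hode' := hode _ (hrI t)
    have hs : 0 < √(f ‖z t‖) := Real.sqrt_pos.mpr hF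
    have hs2 : f ‖z t‖ = √(f ‖z t‖) ^ 2 := (Real.sq_sqrt hF.le).symm
    have hε2 : (ε : ℂ) ^ 2 = 1 := by rcases hε with rfl | rfl <;> norm_num
    simp only [Function.comp_apply, Pi.mul_apply, Pi.add_apply, Pi.div_apply]
    generalize deriv (deriv u) ‖z t‖ = u₂ at *
    generalize deriv u ‖z t‖ = u₁ at *
    generalize u ‖z t‖ = u₀ at *
    generalize deriv f ‖z t‖ = f₁ at *
    generalize √(f ‖z t‖) = s at *
    rw [hs2] at hode'
    generalize ‖z t‖ = r at *
    have hode_cleared :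
        2 * r ^ 2 * s ^ 2 * u₂ + 2 * r * s ^ 2 * u₁ + r ^ 2 * f₁ * u₁ + 2 * u₀ = 0 := by
      field_simp at hode'
      linear_combination hode'
    have hodeC := congrArg Complex.ofReal hode_cleared
    push_cast at hodeC ⊢
    have hrC : (r : ℂ) ≠ 0 := by exact_mod_cast hr.ne'
    have hsC : (s : ℂ) ≠ 0 := by exact_mod_cast hs.ne'
    have hmC : (m : ℂ) ≠ 0 := by exact_mod_cast hm.ne'
    field_simp
    linear_combination (z t * ℓ * Complex.I) * hodeC +
      z t * ℓ * Complex.I * r * (r * f₁ * u₁ + 2 * s ^ 2 * r * u₂ + 2 * s ^ 2 * u₁) * hε2 +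
      2 * ℓ * z t * ε * s * u₁ * r * Complex.I_sq
  intro s t
  exact is_const_of_deriv_eq_zero (fun t => (hdiff t).differentiableAt)
    (fun t => (hdiff t).deriv) s t
end

section
/- Let ν be a natural number with ν ≥ 2, set μ = 2ν − 3, and let c be a real constant. Let w : ℝ → ℂ be twice differentiable with w(s) ≠ 0 for all s, satisfying w''(s) = −c·w(s)·|w(s)|^{μ−1} for all s. Let t : ℝ → ℝ be differentiable with t'(τ) = |w(t(τ))|^{−2(ν−1)} for all τ, and define ζ(τ) = w(t(τ))^ν. Then ζ is twice differentiable and for all τ, ζ''(τ) = −2·ν·(ν−1)·E(t(τ)) · ζ(τ) · |ζ(τ)|^{−(4ν−2)/ν}, where E(s) = (1/2)·|w'(s)|² + (c/(μ+1))·|w(s)|^{μ+1} (which is constant along the motion). -/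
open scoped ComplexConjugate

/-- An even real power of the modulus is a power of `z * conj z`. -/
lemma ofReal_norm_rpow_eq_mul_conj_pow (z : ℂ) (k : ℕ) {x : ℝ} (hx : x = 2 * k) :
    ((‖z‖ ^ x : ℝ) : ℂ) = (z * conj z) ^ k := by
  have h : x = ((2 * k : ℕ) : ℝ) := by rw [hx]; push_cast; ring
  rw [h, Real.rpow_natCast, pow_mul, Complex.mul_conj, Complex.normSq_eq_norm_sq]
  push_cast
  ring

/-- A negative even real power of the modulus is the inverse of a power of `z * conj z`. -/
lemma ofReal_norm_rpow_neg_eq_inv_mul_conj_pow (z : ℂ) (k : ℕ) {x : ℝ} (hx : x = 2 * k) :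
    ((‖z‖ ^ (-x) : ℝ) : ℂ) = ((z * conj z) ^ k)⁻¹ := by
  rw [Real.rpow_neg (norm_nonneg z), Complex.ofReal_inv, ofReal_norm_rpow_eq_mul_conj_pow z k hx]

/-- Bohlin–Arnold–Vassiliev duality, integer conformal power `ν ≥ 2`,
`μ = 2ν − 3`: if `w'' = −c·w·|w|^{μ−1}` and `σ` is the inverse Euler–Sundman
reparametrization, `σ'(τ) = |w(σ(τ))|^{−2(ν−1)}`, then `ζ = (w ∘ σ)^ν` is twice
differentiable and satisfies `ζ'' = −2ν(ν−1)·E(σ(τ))·ζ·|ζ|^{−(4ν−2)/ν}`, where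
`E = (1/2)|w'|² + (c/(μ+1))|w|^{μ+1}` is the conserved energy of the original motion. -/
theorem bohlin_arnold_vassiliev_duality (ν : ℕ) (hν : 2 ≤ ν) (c μ : ℝ)
    (hμ : μ = 2 * (ν : ℝ) - 3)
    (w : ℝ → ℂ) (hw : Differentiable ℝ w) (hw' : Differentiable ℝ (deriv w))
    (hne : ∀ s, w s ≠ 0)
    (heom : ∀ s, deriv (deriv w) s =
      -(c : ℂ) * w s * (((‖w s‖) ^ (μ - 1) : ℝ) : ℂ))
    (σ : ℝ → ℝ) (hσ : Differentiable ℝ σ)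
    (hσ' : ∀ τ, deriv σ τ = (‖w (σ τ)‖) ^ (-(2 * ((ν : ℝ) - 1))))
    (ζ : ℝ → ℂ) (hζ : ∀ τ, ζ τ = (w (σ τ)) ^ ν)
    (E : ℝ → ℝ)
    (hE : ∀ s, E s = (1 / 2) * (‖deriv w s‖) ^ 2 +
      (c / (μ + 1)) * (‖w s‖) ^ (μ + 1)) :
    Differentiable ℝ ζ ∧ Differentiable ℝ (deriv ζ) ∧
      ∀ τ, deriv (deriv ζ) τ =
        -((2 * (ν : ℝ) * ((ν : ℝ) - 1) * E (σ τ) : ℝ) : ℂ) * ζ τ *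
          (((‖ζ τ‖) ^ (-((4 * (ν : ℝ) - 2) / (ν : ℝ))) : ℝ) : ℂ) := by
  obtain ⟨k, rfl⟩ := Nat.exists_eq_add_of_le' hν
  have hk : ((k : ℂ) + 1) ≠ 0 := by exact_mod_cast Nat.succ_ne_zero k
  have hν0 : ((k : ℝ) + 2) ≠ 0 := by positivity
  have hconj : ∀ s, conj (w s) ≠ 0 := fun s => (map_ne_zero _).2 (hne s)
  have hspeed : ∀ τ, ((deriv σ τ : ℝ) : ℂ) = ((w (σ τ) * conj (w (σ τ))) ^ (k + 1))⁻¹ := by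
    intro τ
    rw [hσ' τ]
    exact ofReal_norm_rpow_neg_eq_inv_mul_conj_pow _ _ (by push_cast; ring)
  have hwσ : ∀ τ, HasDerivAt (fun τ => w (σ τ)) (deriv σ τ • deriv w (σ τ)) τ := fun τ =>
    (hw (σ τ)).hasDerivAt.scomp τ (hσ τ).hasDerivAt
  have hw'σ : ∀ τ, HasDerivAt (fun τ => deriv w (σ τ))
      (deriv σ τ • deriv (deriv w) (σ τ)) τ := fun τ =>
    (hw' (σ τ)).hasDerivAt.scomp τ (hσ τ).hasDerivAt
  have hconjσ : ∀ τ, HasDerivAt (fun τ => conj (w (σ τ)))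
      (conj (deriv σ τ • deriv w (σ τ))) τ := fun τ => (hwσ τ).star
  -- the conformal factor cancels against the holomorphic part of the speed
  have hζ1 : ∀ τ, HasDerivAt ζ
      (((k : ℂ) + 2) * deriv w (σ τ) / conj (w (σ τ)) ^ (k + 1)) τ := by
    intro τ
    rw [funext hζ]
    refine ((hwσ τ).fun_pow (k + 2)).congr_deriv ?_
    have h1 := hne (σ τ)
    have h2 := hconj (σ τ)
    rw [Complex.real_smul, hspeed τ, mul_pow, show k + 2 - 1 = k + 1 by omega]
    push_cast
    field_simp
  have hζ2 : ∀ τ, HasDerivAt (deriv ζ)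
      (-((2 * ((k + 2 : ℕ) : ℝ) * (((k + 2 : ℕ) : ℝ) - 1) * E (σ τ) : ℝ) : ℂ) * ζ τ *
        (((‖ζ τ‖) ^ (-((4 * ((k + 2 : ℕ) : ℝ) - 2) / ((k + 2 : ℕ) : ℝ))) : ℝ) : ℂ)) τ := by
    intro τ
    have h1 := hne (σ τ)
    have h2 := hconj (σ τ)
    have hnorm : ((‖ζ τ‖ ^ (-((4 * ((k + 2 : ℕ) : ℝ) - 2) / ((k + 2 : ℕ) : ℝ))) : ℝ) : ℂ) =
        ((w (σ τ) * conj (w (σ τ))) ^ (2 * k + 3))⁻¹ := by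
      rw [hζ τ, norm_pow, ← Real.rpow_natCast, ← Real.rpow_mul (norm_nonneg _), mul_neg]
      refine ofReal_norm_rpow_neg_eq_inv_mul_conj_pow _ _ ?_
      push_cast
      field_simp
      ring
    have hkin : ((‖deriv w (σ τ)‖ : ℝ) : ℂ) ^ 2 = deriv w (σ τ) * conj (deriv w (σ τ)) :=
      (Complex.mul_conj' _).symm
    have hpot := ofReal_norm_rpow_eq_mul_conj_pow (w (σ τ)) (k + 1) (x := μ + 1)
      (by rw [hμ]; push_cast; ring)
    have hforce := ofReal_norm_rpow_eq_mul_conj_pow (w (σ τ)) k (x := μ - 1)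
      (by rw [hμ]; push_cast; ring)
    have hμ1 : (μ : ℂ) + 1 = 2 * ((k : ℂ) + 1) := by
      rw [hμ]; push_cast; ring
    rw [funext fun τ => (hζ1 τ).deriv]
    refine (((hw'σ τ).const_mul ((k : ℂ) + 2)).fun_div ((hconjσ τ).fun_pow (k + 1))
      (pow_ne_zero _ h2)).congr_deriv ?_
    rw [hnorm, hζ τ, hE, heom, hforce, Complex.real_smul, Complex.real_smul, map_mul,
      Complex.conj_ofReal, hspeed τ, Nat.add_sub_cancel]
    push_cast
    rw [hpot, hkin, hμ1]
    simp only [mul_pow]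
    field_simp
    ring
  exact ⟨fun τ => (hζ1 τ).differentiableAt, fun τ => (hζ2 τ).differentiableAt,
    fun τ => (hζ2 τ).deriv⟩
end

section
/- Let ν be a natural number with ν ≥ 1, let w : ℝ → ℂ be differentiable with w(s) ≠ 0 for all s, let t : ℝ → ℝ be differentiable with t'(τ) = |w(t(τ))|^{−2(ν−1)} for all τ, and define ζ(τ) = w(t(τ))^ν. Then ζ is differentiable and for all τ, ζ'(τ) = ν · w'(t(τ)) / ( conj(w(t(τ))) )^{ν−1}. -/
/-- The Sundman factor `|z|^{−2(ν−1)}` is the inverse of `(z · conj z)^{ν−1}`. -/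
lemma ofReal_norm_rpow_neg_two_mul (ν : ℕ) (hν : 1 ≤ ν) (z : ℂ) :
    ((‖z‖ ^ (-(2 * ((ν : ℝ) - 1))) : ℝ) : ℂ) = ((z * (starRingEnd ℂ) z) ^ (ν - 1))⁻¹ := by
  have hexp : 2 * ((ν : ℝ) - 1) = ((2 * (ν - 1) : ℕ) : ℝ) := by
    push_cast [Nat.cast_sub hν]
    ring
  rw [hexp, Real.rpow_neg (norm_nonneg z), Real.rpow_natCast, pow_mul, Complex.mul_conj']
  push_cast
  rfl

/-- Under the Euler–Sundman reparametrization `σ'(τ) = |w(σ(τ))|^{−2(ν−1)}`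
(`ν ≥ 1`), the image trajectory `ζ = (w ∘ σ)^ν` is differentiable with
`ζ'(τ) = ν·w'(σ(τ)) / conj(w(σ(τ)))^{ν−1}`. -/
theorem sundman_first_derivative (ν : ℕ) (hν : 1 ≤ ν)
    (w : ℝ → ℂ) (hw : Differentiable ℝ w) (hne : ∀ s, w s ≠ 0)
    (σ : ℝ → ℝ) (hσ : Differentiable ℝ σ)
    (hσ' : ∀ τ, deriv σ τ = ‖w (σ τ)‖ ^ (-(2 * ((ν : ℝ) - 1))))
    (ζ : ℝ → ℂ) (hζ : ∀ τ, ζ τ = (w (σ τ)) ^ ν) :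
    Differentiable ℝ ζ ∧
      ∀ τ, deriv ζ τ = (ν : ℂ) * deriv w (σ τ) / ((starRingEnd ℂ) (w (σ τ))) ^ (ν - 1) := by
  obtain rfl : ζ = fun τ => w (σ τ) ^ ν := funext hζ
  have hderiv (τ : ℝ) : HasDerivAt (fun τ => w (σ τ) ^ ν)
      ((ν : ℂ) * deriv w (σ τ) / ((starRingEnd ℂ) (w (σ τ))) ^ (ν - 1)) τ := by
    have hcomp := ((hw (σ τ)).hasDerivAt.scomp τ (hσ τ).hasDerivAt).pow ν
    refine hcomp.congr_deriv ?_
    have hz : w (σ τ) ≠ 0 := hne _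
    have hconj : (starRingEnd ℂ) (w (σ τ)) ≠ 0 := by simpa using hz
    rw [Complex.real_smul, hσ', ofReal_norm_rpow_neg_two_mul ν hν, mul_pow, Function.comp_apply]
    field_simp
  exact ⟨fun τ => (hderiv τ).differentiableAt, fun τ => (hderiv τ).deriv⟩
end

section
/- Let c be a real constant and let w : ℝ → ℂ be twice differentiable with w(s) ≠ 0 for all s, satisfying the harmonic-oscillator equation w''(s) = −c·w(s) for all s. Let t : ℝ → ℝ be differentiable with t'(τ) = |w(t(τ))|^{−2} for all τ, and define ζ(τ) = w(t(τ))². Then ζ is twice differentiable and for all τ, ζ''(τ) = −2·( |w'(t(τ))|² + c·|w(t(τ))|² ) · ζ(τ) / |ζ(τ)|³. -/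
open ComplexConjugate in
/-- The Euler–Sundman reparametrized velocity of the conformal square is `2 w' / conj w`. -/
lemma hasDerivAt_sq_comp_sundman {w : ℝ → ℂ} {σ : ℝ → ℝ} {τ : ℝ} (hne : w (σ τ) ≠ 0)
    (hw : DifferentiableAt ℝ w (σ τ)) (hσ : HasDerivAt σ (‖w (σ τ)‖ ^ 2)⁻¹ τ) :
    HasDerivAt (fun x => w (σ x) ^ 2) (2 * deriv w (σ τ) / conj (w (σ τ))) τ := by
  have hc : conj (w (σ τ)) ≠ 0 := (map_ne_zero _).2 hne
  refine ((hw.hasDerivAt.scomp τ hσ).pow 2).congr_deriv ?_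
  simp only [Complex.real_smul, Complex.ofReal_inv, Complex.ofReal_pow, ← Complex.mul_conj',
    Function.comp_apply]
  field_simp
  norm_num
  ring

open ComplexConjugate in
/-- Derivative of the reparametrized velocity `2 w' / conj w` along a harmonic oscillator. -/
lemma hasDerivAt_two_mul_deriv_div_conj {c : ℝ} {w : ℝ → ℂ} {σ : ℝ → ℝ} {τ : ℝ}
    (hne : w (σ τ) ≠ 0) (hw : DifferentiableAt ℝ w (σ τ))
    (hw' : HasDerivAt (deriv w) (-(c : ℂ) * w (σ τ)) (σ τ))
    (hσ : HasDerivAt σ (‖w (σ τ)‖ ^ 2)⁻¹ τ) :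
    HasDerivAt (fun x => 2 * deriv w (σ x) / conj (w (σ x)))
      (-((2 * (‖deriv w (σ τ)‖ ^ 2 + c * ‖w (σ τ)‖ ^ 2) : ℝ) : ℂ) *
        w (σ τ) ^ 2 / ((‖w (σ τ) ^ 2‖ ^ 3 : ℝ) : ℂ)) τ := by
  have hc : conj (w (σ τ)) ≠ 0 := (map_ne_zero _).2 hne
  have hnorm : ‖w (σ τ) ^ 2‖ ^ 3 = (‖w (σ τ)‖ ^ 2) ^ 3 := by rw [norm_pow]
  refine (((hw'.scomp τ hσ).const_mul 2).div (hw.hasDerivAt.scomp τ hσ).star hc).congr_deriv ?_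
  rw [hnorm]
  simp only [Complex.real_smul, Complex.ofReal_inv, Complex.ofReal_pow, Complex.ofReal_mul,
    Complex.ofReal_add, Complex.ofReal_ofNat, ← Complex.mul_conj', Function.comp_apply,
    ← starRingEnd_apply, map_mul, map_inv₀, Complex.conj_conj]
  field_simp
  ring

/-- classical Bohlin duality, `ν = 2`: if `w'' = −c·w` (planar isotropic
harmonic oscillator) and `σ'(τ) = |w(σ(τ))|^{−2}`, then `ζ = (w ∘ σ)²` is twice
differentiable and satisfies the Kepler-type equation
`ζ'' = −2(|w'(σ)|² + c·|w(σ)|²)·ζ/|ζ|³`. -/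
theorem bohlin_duality (c : ℝ)
    (w : ℝ → ℂ) (hw : Differentiable ℝ w) (hw' : Differentiable ℝ (deriv w))
    (hne : ∀ s, w s ≠ 0)
    (heom : ∀ s, deriv (deriv w) s = -(c : ℂ) * w s)
    (σ : ℝ → ℝ) (hσ : Differentiable ℝ σ)
    (hσ' : ∀ τ, deriv σ τ = ‖w (σ τ)‖ ^ (-2 : ℝ))
    (ζ : ℝ → ℂ) (hζ : ∀ τ, ζ τ = (w (σ τ)) ^ 2) :
    Differentiable ℝ ζ ∧ Differentiable ℝ (deriv ζ) ∧
      ∀ τ, deriv (deriv ζ) τ =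
        -((2 * (‖deriv w (σ τ)‖ ^ 2 + c * ‖w (σ τ)‖ ^ 2) : ℝ) : ℂ) *
          ζ τ / ((‖ζ τ‖ ^ 3 : ℝ) : ℂ) := by
  have hσd : ∀ τ, HasDerivAt σ (‖w (σ τ)‖ ^ 2)⁻¹ τ := fun τ => by
    have h := (hσ τ).hasDerivAt
    rwa [hσ', Real.rpow_neg (norm_nonneg _), Real.rpow_ofNat] at h
  obtain rfl : ζ = fun τ => w (σ τ) ^ 2 := funext hζ
  have hζ₁ := fun τ => hasDerivAt_sq_comp_sundman (hne (σ τ)) (hw (σ τ)) (hσd τ)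
  have hζ₂ := fun τ => hasDerivAt_two_mul_deriv_div_conj (hne (σ τ)) (hw (σ τ))
    (heom (σ τ) ▸ (hw' (σ τ)).hasDerivAt) (hσd τ)
  rw [deriv_eq hζ₁]
  exact ⟨fun τ => (hζ₁ τ).differentiableAt, fun τ => (hζ₂ τ).differentiableAt,
    fun τ => (hζ₂ τ).deriv⟩
end
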